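/- arXiv:2306.02731 — 2 statements merged into one kernel-verified Lean document; each statement's English description precedes it below -/
import Mathlib

section
/- Let n, p, q ≥ 1. Let g : ℝ × ℝᵖ → ℝ^q be continuously differentiable and write θ(t) = g(t, θ) for θ ∈ ℝᵖ. Let f : ℝⁿ × ℝ^q × ℝ → ℝⁿ be continuously differentiable. For each θ ∈ ℝᵖ let z(·; θ) : [0, T] → ℝⁿ solve z'(t) = f(z(t), g(t, θ), t) with fixed initial condition z(0; θ) = z₀, and assume the map θ ↦ z(t; θ) is continuously differentiable with derivative jointly continuous in (t, θ). For t ∈ [0, T] let Φ_{t,T} denote the map sending x ∈ ℝⁿ to the value at time T of the solution of y' = f(y, g(s, θ), s) with y(t) = x, and assume Φ_{t,T} is continuously differentiable with derivative jointly continuous in (t, x). Then the derivative of θ ↦ z(T; θ) at θ satisfies D_θ z(T; θ) = ∫₀ᵀ D_x Φ_{t,T}(z(t; θ)) ∘ (D_w f)(z(t; θ), g(t, θ), t) ∘ (D_θ g)(t, θ) dt. -/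
open Set intervalIntegral Filter Topology MeasureTheory

section

variable {E F P : Type*} [NormedAddCommGroup E] [NormedSpace ℝ E]
  [NormedAddCommGroup F] [NormedSpace ℝ F] [NormedAddCommGroup P] [NormedSpace ℝ P]

/-- Forward uniqueness for an ODE with locally Lipschitz right-hand side. -/
theorem LocallyLipschitz.eqOn_Icc_of_hasDerivAt {v : ℝ × E → E} (hv : LocallyLipschitz v)
    {a b : ℝ} {y₁ y₂ : ℝ → E}
    (h₁ : ∀ s ∈ Icc a b, HasDerivAt y₁ (v (s, y₁ s)) s)
    (h₂ : ∀ s ∈ Icc a b, HasDerivAt y₂ (v (s, y₂ s)) s) (h : y₁ a = y₂ a) :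
    EqOn y₁ y₂ (Icc a b) := by
  have c₁ : ContinuousOn y₁ (Icc a b) := fun s hs => (h₁ s hs).continuousAt.continuousWithinAt
  have c₂ : ContinuousOn y₂ (Icc a b) := fun s hs => (h₂ s hs).continuousAt.continuousWithinAt
  obtain ⟨K, hK⟩ := hv.locallyLipschitzOn.exists_lipschitzOnWith_of_compact
    (isCompact_Icc.prod ((isCompact_Icc.image_of_continuousOn c₁).union
      (isCompact_Icc.image_of_continuousOn c₂)))
  refine ODE_solution_unique_of_mem_Icc_right (v := fun s x => v (s, x)) (K := K)
    (s := fun _ => y₁ '' Icc a b ∪ y₂ '' Icc a b) (fun s hs x hx x' hx' => ?_) c₁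
    (fun s hs => (h₁ s (Ico_subset_Icc_self hs)).hasDerivWithinAt)
    (fun s hs => .inl (mem_image_of_mem _ (Ico_subset_Icc_self hs))) c₂
    (fun s hs => (h₂ s (Ico_subset_Icc_self hs)).hasDerivWithinAt)
    (fun s hs => .inr (mem_image_of_mem _ (Ico_subset_Icc_self hs))) h
  have := hK (mk_mem_prod (Ico_subset_Icc_self hs) hx) (mk_mem_prod (Ico_subset_Icc_self hs) hx')
  simpa [Prod.edist_eq] using this

/-- If two curves meet at time `t`, the difference of their images under a time-dependent family
of maps has a derivative at `t` that does not involve the time derivative of the family. -/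
theorem HasDerivWithinAt.sub_of_family {Φ : ℝ → E → F} {DΦ : ℝ → E → E →L[ℝ] F} {S : Set ℝ}
    (hΦ : ∀ s ∈ S, ∀ x, HasFDerivAt (Φ s) (DΦ s x) x) {a b : ℝ → E} {a' b' : E} {t : ℝ}
    (hcont : ContinuousAt (fun s : ℝ × E => DΦ s.1 s.2) (t, a t))
    (ha : HasDerivWithinAt a a' S t) (hb : HasDerivWithinAt b b' S t) (hab : a t = b t) :
    HasDerivWithinAt (fun s => Φ s (a s) - Φ s (b s)) (DΦ t (a t) (a' - b')) S t := by
  have hlin : HasDerivWithinAt (fun s => DΦ t (a t) (a s - b s)) (DΦ t (a t) (a' - b')) S t :=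
    (DΦ t (a t)).hasFDerivAt.comp_hasDerivWithinAt t (ha.sub hb)
  have hO : (fun s => a s - b s) =O[𝓝[S] t] fun s => s - t := by
    simpa [hab, Function.comp_def] using (ha.sub hb).isBigO_sub
  have ho : (fun s => Φ s (a s) - Φ s (b s) - DΦ t (a t) (a s - b s)) =o[𝓝[S] t]
      fun s => s - t := by
    refine Asymptotics.IsLittleO.trans_isBigO (Asymptotics.isLittleO_iff.2 fun c hc => ?_) hO
    obtain ⟨δ, hδ, hball⟩ := Metric.continuousAt_iff.1 hcont c hc
    have e₁ := ha.continuousWithinAt (Metric.ball_mem_nhds _ hδ)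
    have e₂ := hb.continuousWithinAt (Metric.ball_mem_nhds _ hδ)
    rw [← hab] at e₂
    filter_upwards [e₁, e₂, self_mem_nhdsWithin,
      mem_nhdsWithin_of_mem_nhds (Metric.ball_mem_nhds t hδ)] with s h₁ h₂ hs hst
    refine (convex_ball (a t) δ).norm_image_sub_le_of_norm_hasFDerivWithin_le'
      (fun x _ => (hΦ s hs x).hasFDerivWithinAt) (fun x hx => ?_) h₂ h₁
    rw [← dist_eq_norm]
    exact (hball (x := (s, x)) (by simpa [Prod.dist_eq] using ⟨hst, hx⟩)).le
  rw [hasDerivWithinAt_iff_isLittleO] at hlin ⊢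
  refine (ho.add hlin).congr_left fun s => ?_
  simp only [hab, sub_self, map_zero]
  abel

/-- Product rule for `x ↦ A x (B x)` at a zero of `B`: continuity of `A` is enough. -/
theorem HasFDerivAt.clm_apply_of_eq_zero {A : P → E →L[ℝ] F} {B : P → E} {B' : P →L[ℝ] E} {x : P}
    (hA : ContinuousAt A x) (hB : HasFDerivAt B B' x) (h0 : B x = 0) :
    HasFDerivAt (fun y => A y (B y)) ((A x).comp B') x := by
  have hO : B =O[𝓝 x] fun y => y - x := by simpa [h0] using hB.isBigO_sub
  have hA0 : (fun y => A y - A x) =o[𝓝 x] fun _ => (1 : ℝ) :=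
    (Asymptotics.isLittleO_one_iff ℝ).2 (by simpa using hA.tendsto.sub_const (A x))
  have ho : (fun y => (A y - A x) (B y)) =o[𝓝 x] fun y => y - x := by
    refine Asymptotics.IsBigO.trans_isLittleO (g := fun y => ‖A y - A x‖ * ‖B y‖)
      (.of_bound 1 (.of_forall fun y => by simpa using (A y - A x).le_opNorm (B y))) ?_
    simpa using hA0.norm_left.mul_isBigO hO.norm_norm
  have hlin := (A x).hasFDerivAt.comp x hB
  rw [hasFDerivAt_iff_isLittleO] at hlin ⊢
  refine (ho.add hlin).congr_left fun y => ?_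
  simp [h0]

/-- Nonlinear variation of constants: if `Φ t` is the time-`t`-to-`T` solution map of `y' = v (s, y)`
and `u` solves `u' = w`, then `u T - Φ 0 (u 0) = ∫ DΦ t (u t) (w t - v (t, u t)) dt`. -/
theorem integral_solutionMap_eq_sub [CompleteSpace E] {v : ℝ × E → E} (hv : LocallyLipschitz v)
    {T : ℝ} (hT : 0 ≤ T) {Φ : ℝ → E → E}
    (hΦ : ∀ t ∈ Icc (0 : ℝ) T, ∀ x, ∃ y : ℝ → E, y t = x ∧
      (∀ s ∈ Icc (0 : ℝ) T, HasDerivAt y (v (s, y s)) s) ∧ Φ t x = y T)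
    {DΦ : ℝ → E → E →L[ℝ] E} (hDΦ : ∀ t ∈ Icc (0 : ℝ) T, ∀ x, HasFDerivAt (Φ t) (DΦ t x) x)
    (hDΦcont : Continuous fun s : ℝ × E => DΦ s.1 s.2) {u w : ℝ → E}
    (hu : ∀ t ∈ Icc (0 : ℝ) T, HasDerivAt u (w t) t) (hw : ContinuousOn w (Icc 0 T)) :
    ∫ t in (0 : ℝ)..T, DΦ t (u t) (w t - v (t, u t)) = u T - Φ 0 (u 0) := by
  have huc : ContinuousOn u (Icc 0 T) := fun s hs => (hu s hs).continuousAt.continuousWithinAt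
  have hderiv : ∀ t ∈ Icc (0 : ℝ) T, HasDerivWithinAt (fun s => Φ s (u s))
      (DΦ t (u t) (w t - v (t, u t))) (Icc 0 T) t := by
    intro t ht
    obtain ⟨y, hyt, hy, -⟩ := hΦ t ht (u t)
    have hconst : ∀ s ∈ Icc (0 : ℝ) T, Φ s (y s) = y T := by
      intro s hs
      obtain ⟨y', hy's, hy', h⟩ := hΦ s hs (y s)
      rw [h]
      have hsub : Icc s T ⊆ Icc 0 T := Icc_subset_Icc_left hs.1
      exact hv.eqOn_Icc_of_hasDerivAt (fun r hr => hy' r (hsub hr)) (fun r hr => hy r (hsub hr))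
        hy's (right_mem_Icc.2 hs.2)
    have key := ((hu t ht).hasDerivWithinAt (s := Icc 0 T)).sub_of_family hDΦ
      hDΦcont.continuousAt (hy t ht).hasDerivWithinAt hyt.symm
    rw [hyt] at key
    refine (key.add_const (y T)).congr (fun s hs => ?_) ?_
    · rw [hconst s hs, sub_add_cancel]
    · rw [hconst t ht, sub_add_cancel]
  have hΦT : Φ T (u T) = u T := by
    obtain ⟨y, hyT, -, h⟩ := hΦ T (right_mem_Icc.2 hT) (u T)
    rw [h, hyT]
  have hint : ContinuousOn (fun t => DΦ t (u t) (w t - v (t, u t))) (Icc 0 T) :=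
    (hDΦcont.comp_continuousOn (continuousOn_id.prodMk huc)).clm_apply
      (hw.sub (hv.continuous.comp_continuousOn (continuousOn_id.prodMk huc)))
  rw [integral_eq_sub_of_hasDerivAt_of_le hT (fun t ht => (hderiv t ht).continuousWithinAt)
    (fun t ht => (hderiv t (Ioo_subset_Icc_self ht)).hasDerivAt (Icc_mem_nhds ht.1 ht.2))
    (hint.intervalIntegrable_of_Icc hT), hΦT]

end

/-- **Continuous total derivative decomposition** (Theorem 2 of the paper).  For the ODE
`z' (t) = f (z t, g (t, θ), t)` with fixed initial condition `z 0 = z₀`, the derivative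
of the terminal state with respect to the parameters `θ` is
`D_θ z(T; θ) = ∫₀ᵀ D_x Φ_{t,T} (z t) ∘ (D_w f)(z t, g (t, θ), t) ∘ (D_θ g)(t, θ) dt`,
where `Φ_{t,T}` is the time-`t`-to-time-`T` solution map. -/
theorem continuous_total_derivative_decomposition
    (n p q : ℕ) (hn : 1 ≤ n) (hp : 1 ≤ p) (hq : 1 ≤ q) (T : ℝ) (hT : 0 ≤ T)
    (g : ℝ × (Fin p → ℝ) → (Fin q → ℝ)) (hg : ContDiff ℝ 1 g)
    (f : (Fin n → ℝ) × (Fin q → ℝ) × ℝ → (Fin n → ℝ)) (hf : ContDiff ℝ 1 f)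
    (z₀ : Fin n → ℝ) (z : (Fin p → ℝ) → ℝ → (Fin n → ℝ))
    (hz0 : ∀ θ', z θ' 0 = z₀)
    (hzode : ∀ θ', ∀ t ∈ Icc (0 : ℝ) T,
      HasDerivAt (z θ') (f (z θ' t, g (t, θ'), t)) t)
    (Dz : ℝ → (Fin p → ℝ) → ((Fin p → ℝ) →L[ℝ] (Fin n → ℝ)))
    (hDz : ∀ t ∈ Icc (0 : ℝ) T, ∀ θ', HasFDerivAt (fun θ'' => z θ'' t) (Dz t θ') θ')
    (hDzcont : Continuous fun s : ℝ × (Fin p → ℝ) => Dz s.1 s.2)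
    (θ : Fin p → ℝ)
    (Φ : ℝ → (Fin n → ℝ) → (Fin n → ℝ))
    (hΦ : ∀ t ∈ Icc (0 : ℝ) T, ∀ x, ∃ y : ℝ → (Fin n → ℝ),
      y t = x ∧ (∀ s ∈ Icc (0 : ℝ) T, HasDerivAt y (f (y s, g (s, θ), s)) s) ∧
        Φ t x = y T)
    (DΦ : ℝ → (Fin n → ℝ) → ((Fin n → ℝ) →L[ℝ] (Fin n → ℝ)))
    (hDΦ : ∀ t ∈ Icc (0 : ℝ) T, ∀ x, HasFDerivAt (Φ t) (DΦ t x) x)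
    (hDΦcont : Continuous fun s : ℝ × (Fin n → ℝ) => DΦ s.1 s.2) :
    Dz T θ = ∫ t in (0 : ℝ)..T,
      (DΦ t (z θ t)).comp
        ((fderiv ℝ (fun w => f (z θ t, w, t)) (g (t, θ))).comp
          (fderiv ℝ (fun θ' => g (t, θ')) θ)) := by
  have hv : LocallyLipschitz fun s : ℝ × (Fin n → ℝ) => f (s.2, g (s.1, θ), s.1) :=
    ContDiff.locallyLipschitz (𝕂 := ℝ) (by fun_prop)
  have hzc : ∀ θ', ContinuousOn (z θ') (Icc 0 T) := fun θ' s hs =>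
    (hzode θ' s hs).continuousAt.continuousWithinAt
  have hrhs : ∀ θ' θ'', ContinuousOn (fun t => f (z θ' t, g (t, θ''), t)) (Icc 0 T) :=
    fun θ' θ'' => hf.continuous.comp_continuousOn ((hzc θ').prodMk
      ((hg.continuous.comp (by fun_prop)).continuousOn.prodMk continuousOn_id))
  have hDΦz : ∀ θ', ContinuousOn (fun t => DΦ t (z θ' t)) (Icc 0 T) := fun θ' =>
    hDΦcont.comp_continuousOn (continuousOn_id.prodMk (hzc θ'))
  set I : (Fin p → ℝ) → ℝ → Fin n → ℝ := fun θ' t =>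
    DΦ t (z θ' t) (f (z θ' t, g (t, θ'), t) - f (z θ' t, g (t, θ), t)) with hI
  have hformula : ∀ θ', z θ' T = (∫ t in Ioc 0 T, I θ' t) + Φ 0 z₀ := by
    intro θ'
    have := integral_solutionMap_eq_sub hv hT hΦ hDΦ hDΦcont (hzode θ') (hrhs θ' θ')
    rw [integral_of_le hT, hz0] at this
    exact eq_add_of_sub_eq this.symm
  have hIcont : ∀ θ', ContinuousOn (I θ') (Icc 0 T) := fun θ' =>
    (hDΦz θ').clm_apply ((hrhs θ' θ').sub (hrhs θ' θ))
  have hIθ : ∀ t, I θ t = 0 := fun t => by simp [hI]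
  have hgθ : ∀ t, HasFDerivAt (fun θ' => g (t, θ')) (fderiv ℝ (fun θ' => g (t, θ')) θ) θ :=
    fun t => ((hg.differentiable one_ne_zero).comp (by fun_prop) θ).hasFDerivAt
  set Dw : ℝ → (Fin q → ℝ) →L[ℝ] (Fin n → ℝ) := fun t => (fderiv ℝ f (z θ t, g (t, θ), t)).comp
    ((ContinuousLinearMap.inr ℝ (Fin n → ℝ) ((Fin q → ℝ) × ℝ)).comp
      (ContinuousLinearMap.inl ℝ (Fin q → ℝ) ℝ)) with hDw
  have hDw_eq : ∀ t, fderiv ℝ (fun w => f (z θ t, w, t)) (g (t, θ)) = Dw t := fun t =>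
    ((hf.differentiable one_ne_zero _).hasFDerivAt.comp (g (t, θ))
      ((hasFDerivAt_prodMk_right _ _).comp (g (t, θ)) (hasFDerivAt_prodMk_left _ _))).fderiv
  have hDg_eq : ∀ t, fderiv ℝ (fun θ' => g (t, θ')) θ =
      (fderiv ℝ g (t, θ)).comp (ContinuousLinearMap.inr ℝ ℝ (Fin p → ℝ)) := fun t =>
    ((hg.differentiable one_ne_zero _).hasFDerivAt.comp θ (hasFDerivAt_prodMk_right _ _)).fderiv
  simp only [hDw_eq]
  have hI' : ContinuousOn (fun t => (DΦ t (z θ t)).comp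
      ((Dw t).comp (fderiv ℝ (fun θ' => g (t, θ')) θ))) (Icc 0 T) := by
    simp only [hDg_eq]
    have h₁ := (hf.continuous_fderiv one_ne_zero).comp_continuousOn ((hzc θ).prodMk
      ((hg.continuous.comp (g := g) (f := fun t : ℝ => (t, θ)) (by fun_prop)).continuousOn.prodMk
        continuousOn_id))
    have h₂ : Continuous fun t : ℝ => fderiv ℝ g (t, θ) :=
      (hg.continuous_fderiv one_ne_zero).comp (by fun_prop)
    exact (hDΦz θ).clm_comp ((h₁.clm_comp continuousOn_const).clm_comp
      (h₂.continuousOn.clm_comp continuousOn_const))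
  have hdiff : ∀ t ∈ Icc (0 : ℝ) T, HasFDerivAt (I · t) ((DΦ t (z θ t)).comp
      ((Dw t).comp (fderiv ℝ (fun θ' => g (t, θ')) θ))) θ := by
    intro t ht
    have hft := (hf.differentiable one_ne_zero (z θ t, g (t, θ), t)).hasFDerivAt
    have hB := (hft.comp θ ((hDz t ht θ).prodMk ((hgθ t).prodMk (hasFDerivAt_const t θ)))).sub
      (hft.comp θ ((hDz t ht θ).prodMk
        ((hasFDerivAt_const (g (t, θ)) θ).prodMk (hasFDerivAt_const t θ))))
    refine HasFDerivAt.clm_apply_of_eq_zero (A := fun θ' => DΦ t (z θ' t)) ?_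
      (hB.congr_fderiv ?_) (sub_self _)
    · exact hDΦcont.continuousAt.comp_of_eq
        (continuousAt_const.prodMk (hDz t ht θ).continuousAt) rfl
    · ext1 x
      simp [hDw, ← map_sub]
  have hbound : ∃ C, ∀ t ∈ Icc (0 : ℝ) T, ∀ θ' ∈ Metric.closedBall θ 1,
      ‖I θ' t - I θ t‖ ≤ C * ‖θ' - θ‖ := by
    have hcpt : IsCompact (Icc (0 : ℝ) T ×ˢ Metric.closedBall θ 1) :=
      isCompact_Icc.prod (isCompact_closedBall θ 1)
    obtain ⟨C, hC⟩ := hcpt.exists_bound_of_continuousOn hDzcont.continuousOn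
    obtain ⟨R, hR⟩ := isCompact_Icc.exists_bound_of_continuousOn (hzc θ)
    have hzmem : ∀ t ∈ Icc (0 : ℝ) T, ∀ θ' ∈ Metric.closedBall θ 1,
        z θ' t ∈ Metric.closedBall (0 : Fin n → ℝ) (R + C) := by
      intro t ht θ' hθ'
      have hθ : θ ∈ Metric.closedBall θ 1 := Metric.mem_closedBall_self zero_le_one
      have h₁ := (convex_closedBall θ 1).norm_image_sub_le_of_norm_hasFDerivWithin_le
        (fun x _ => (hDz t ht x).hasFDerivWithinAt) (fun x hx => hC (t, x) ⟨ht, hx⟩) hθ hθ'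
      have hC0 : 0 ≤ C := (norm_nonneg _).trans (hC (t, θ) ⟨ht, hθ⟩)
      have h₂ : ‖θ' - θ‖ ≤ 1 := by simpa [dist_eq_norm] using hθ'
      rw [mem_closedBall_zero_iff]
      calc ‖z θ' t‖ ≤ ‖z θ t‖ + ‖z θ' t - z θ t‖ := norm_le_insert' _ _
        _ ≤ R + C := add_le_add (hR t ht) (h₁.trans (mul_le_of_le_one_right hC0 h₂))
    obtain ⟨M, hM⟩ := (isCompact_Icc.prod (isCompact_closedBall (0 : Fin n → ℝ)
      (R + C))).exists_bound_of_continuousOn hDΦcont.continuousOn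
    obtain ⟨Lg, hLg⟩ := (ContDiff.locallyLipschitz
      hg).locallyLipschitzOn.exists_lipschitzOnWith_of_compact hcpt
    obtain ⟨Lf, hLf⟩ := (ContDiff.locallyLipschitz
      hf).locallyLipschitzOn.exists_lipschitzOnWith_of_compact
        ((isCompact_closedBall (0 : Fin n → ℝ) (R + C)).prod
          ((hcpt.image hg.continuous).prod (isCompact_Icc (a := (0 : ℝ)) (b := T))))
    refine ⟨M * (Lf * Lg), fun t ht θ' hθ' => ?_⟩
    have hθ : θ ∈ Metric.closedBall θ 1 := Metric.mem_closedBall_self zero_le_one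
    have hz' := hzmem t ht θ' hθ'
    have hM0 : 0 ≤ M := (norm_nonneg _).trans (hM (t, z θ' t) ⟨ht, hz'⟩)
    have hgL := hLg.norm_sub_le (mk_mem_prod ht hθ') (mk_mem_prod ht hθ)
    have hfL := hLf.norm_sub_le
      (mk_mem_prod hz' (mk_mem_prod (mem_image_of_mem g (mk_mem_prod ht hθ')) ht))
      (mk_mem_prod hz' (mk_mem_prod (mem_image_of_mem g (mk_mem_prod ht hθ)) ht))
    simp only [Prod.mk_sub_mk, sub_self, Prod.norm_mk, norm_zero, norm_nonneg, sup_of_le_left,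
      sup_of_le_right] at hgL hfL
    rw [hIθ, sub_zero]
    calc ‖I θ' t‖ ≤ ‖DΦ t (z θ' t)‖ * ‖f (z θ' t, g (t, θ'), t) - f (z θ' t, g (t, θ), t)‖ :=
          ContinuousLinearMap.le_opNorm _ _
      _ ≤ M * (Lf * (Lg * ‖θ' - θ‖)) := by
          gcongr
          · exact hM (t, z θ' t) ⟨ht, hz'⟩
          · exact hfL.trans (by gcongr)
      _ = M * (Lf * Lg) * ‖θ' - θ‖ := by ring
  obtain ⟨C, hC⟩ := hbound
  have hae : ∀ {Q : ℝ → Prop}, (∀ t ∈ Icc (0 : ℝ) T, Q t) →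
      ∀ᵐ t ∂volume.restrict (Ioc 0 T), Q t := fun h =>
    (ae_restrict_iff' measurableSet_Ioc).2 (.of_forall fun t ht => h t (Ioc_subset_Icc_self ht))
  have hmain := (hasFDerivAt_integral_of_dominated_loc_of_lip' (𝕜 := ℝ)
    (μ := volume.restrict (Ioc 0 T)) (F := I) (bound := fun _ => C)
    (Metric.closedBall_mem_nhds θ one_pos)
    (fun θ' _ => ((hIcont θ').mono Ioc_subset_Icc_self).aestronglyMeasurable measurableSet_Ioc)
    ((hIcont θ).integrableOn_Icc.mono_set Ioc_subset_Icc_self)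
    ((hI'.mono Ioc_subset_Icc_self).aestronglyMeasurable measurableSet_Ioc)
    (hae hC) (integrable_const C) (hae hdiff)).2
  rw [integral_of_le hT]
  refine (hDz T (right_mem_Icc.2 hT) θ).unique ?_
  simp only [hformula]
  exact hmain.add_const _
end

section
/- Let n, p, q ≥ 1 and T > 0. Let f : ℝⁿ × ℝᵖ × ℝ → ℝⁿ and g : ℝⁿ × ℝ^q × ℝ → ℝⁿ be continuously differentiable. For parameters θ ∈ ℝᵖ and φ ∈ ℝ^q, let z(·; θ, φ) : [0, T] → ℝⁿ be the continuous path with fixed initial condition z(0) = z₀ that satisfies z'(t) = f(z(t), θ, t) for t ∈ [0, T/2] and z'(t) = g(z(t), φ, t) for t ∈ (T/2, T], and assume (θ, φ) ↦ z(t; θ, φ) is continuously differentiable with derivative jointly continuous in t. For t ∈ [0, T] let Φ_{t,T} denote the map sending x ∈ ℝⁿ to the value at time T of the piecewise solution passing through x at time t, assumed continuously differentiable in x with derivative jointly continuous in (t, x). Let L : ℝⁿ → ℝ be differentiable and set a(t) = DL(z(T)) ∘ D_x Φ_{t,T}(z(t)). Then d/dθ [ L(z(T; θ, φ)) ] = ∫₀^{T/2}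 a(t) ∘ (D_θ f)(z(t), θ, t) dt and d/dφ [ L(z(T; θ, φ)) ] = ∫_{T/2}^{T} a(t) ∘ (D_φ g)(z(t), φ, t) dt. -/
open Set intervalIntegral
open Filter Topology Asymptotics MeasureTheory

section PiecewiseFlow

variable {E P : Type*} [NormedAddCommGroup E] [NormedSpace ℝ E]
  [NormedAddCommGroup P] [NormedSpace ℝ P]

/-- If two curves meet at time `t`, the derivative at `t` of the difference of their images under
a time-dependent map only sees the space derivative of that map. -/
theorem hasDerivWithinAt_image_sub_image {Φ : ℝ → E → E} {DΦ : ℝ → E → (E →L[ℝ] E)} {S : Set ℝ}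
    {t : ℝ} {u y : ℝ → E} {u' y' : E} (hDΦ : ∀ s ∈ S, ∀ x, HasFDerivAt (Φ s) (DΦ s x) x)
    (hDΦcont : Continuous fun s : ℝ × E => DΦ s.1 s.2)
    (hu : HasDerivWithinAt u u' S t) (hy : HasDerivWithinAt y y' S t) (huy : u t = y t) :
    HasDerivWithinAt (fun s => Φ s (u s) - Φ s (y s)) (DΦ t (u t) (u' - y')) S t := by
  have hsub : HasDerivWithinAt (fun s => u s - y s) (u' - y') S t := hu.sub hy
  have hO : (fun s => u s - y s) =O[𝓝[S] t] fun s => s - t := by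
    simpa [huy] using hsub.hasFDerivWithinAt.isBigO_sub
  have hnear : (fun s => Φ s (u s) - Φ s (y s) - DΦ t (u t) (u s - y s))
      =o[𝓝[S] t] fun s => u s - y s := by
    refine isLittleO_iff.2 fun ε hε => ?_
    obtain ⟨δ, hδ, hball⟩ := Metric.continuousAt_iff.1
      (hDΦcont.continuousAt (x := (t, u t))) ε hε
    filter_upwards [self_mem_nhdsWithin, mem_nhdsWithin_of_mem_nhds (Metric.ball_mem_nhds t hδ),
      hu.continuousWithinAt (Metric.ball_mem_nhds (u t) hδ),
      hy.continuousWithinAt (Metric.ball_mem_nhds (y t) hδ)] with s hs hst hus hys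
    refine Convex.norm_image_sub_le_of_norm_hasFDerivWithin_le'
      (fun x _ => (hDΦ s hs x).hasFDerivWithinAt) (fun x hx => ?_) (convex_ball (u t) δ)
      (huy ▸ hys) hus
    rw [← dist_eq_norm]
    exact (hball (x := (s, x)) (max_lt hst hx)).le
  rw [hasDerivWithinAt_iff_isLittleO]
  refine ((hnear.trans_isBigO hO).add (((DΦ t (u t)).isBigO_comp _ _).trans_isLittleO
    (hasDerivWithinAt_iff_isLittleO.1 hsub))).congr_left fun s => ?_
  simp only [huy, map_sub, map_smul, sub_self, sub_zero]
  abel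

/-- A solution of a differential equation on a half-open interval which is continuous up to the
left endpoint is a solution on the closed interval. -/
theorem hasDerivWithinAt_Icc_of_Ioc {c d : ℝ} (hcd : c < d) {V : E × ℝ → E} (hV : Continuous V)
    {y : ℝ → E} (hy : ContinuousOn y (Icc c d))
    (hode : ∀ s ∈ Ioc c d, HasDerivWithinAt y (V (y s, s)) (Ioc c d) s) :
    ∀ s ∈ Icc c d, HasDerivWithinAt y (V (y s, s)) (Icc c d) s := by
  intro s hs
  rcases hs.1.eq_or_lt with rfl | hcs
  · have hderiv : ∀ r ∈ Ioo c d, HasDerivAt y (V (y r, r)) r := fun r hr =>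
      (hode r (Ioo_subset_Ioc_self hr)).hasDerivAt (Ioc_mem_nhds hr.1 hr.2)
    have hmem : Ioo c d ∈ 𝓝[>] c := Ioo_mem_nhdsGT hcd
    have hylim : ContinuousWithinAt y (Ioo c d) c := (hy c hs).mono Ioo_subset_Icc_self
    refine (hasDerivWithinAt_Ici_of_tendsto_deriv (s := Ioo c d)
      (fun r hr => (hderiv r hr).differentiableAt.differentiableWithinAt) hylim hmem ?_).mono
      Icc_subset_Ici_self
    have hlim : Tendsto (fun r => V (y r, r)) (𝓝[>] c) (𝓝 (V (y c, c))) := by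
      rw [← nhdsWithin_Ioo_eq_nhdsGT hcd]
      exact (hV.continuousAt (x := (y c, c))).comp_continuousWithinAt
        (f := fun r => (y r, r)) (hylim.prodMk continuousWithinAt_id)
    exact hlim.congr' (by filter_upwards [hmem] with r hr using (hderiv r hr).deriv.symm)
  · refine (hode s ⟨hcs, hs.2⟩).mono_of_mem_nhdsWithin ?_
    filter_upwards [self_mem_nhdsWithin, mem_nhdsWithin_of_mem_nhds (Ioi_mem_nhds hcs)]
      with r hr hr' using ⟨hr', hr.2⟩

/-- Forward uniqueness for a continuously differentiable field. -/
theorem eqOn_Icc_of_contDiff [ProperSpace E] {c d t : ℝ} (hct : c ≤ t) {V : E × ℝ → E}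
    (hV : ContDiff ℝ 1 V) {y w : ℝ → E}
    (hy : ∀ s ∈ Icc c d, HasDerivWithinAt y (V (y s, s)) (Icc c d) s)
    (hw : ∀ s ∈ Icc c d, HasDerivWithinAt w (V (w s, s)) (Icc c d) s) (hyw : y t = w t) :
    EqOn y w (Icc t d) := by
  have hsub : Icc t d ⊆ Icc c d := Icc_subset_Icc_left hct
  have hyc : ContinuousOn y (Icc t d) := fun s hs => ((hy s (hsub hs)).mono hsub).continuousWithinAt
  have hwc : ContinuousOn w (Icc t d) := fun s hs => ((hw s (hsub hs)).mono hsub).continuousWithinAt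
  obtain ⟨R, hR⟩ := isCompact_Icc.exists_bound_of_continuousOn hyc
  obtain ⟨R', hR'⟩ := isCompact_Icc.exists_bound_of_continuousOn hwc
  obtain ⟨K, hK⟩ := LocallyLipschitzOn.exists_lipschitzOnWith_of_compact
    ((isCompact_closedBall (0 : E) (max R R')).prod (isCompact_Icc (a := t) (b := d)))
    (hV.locallyLipschitz.locallyLipschitzOn)
  have hright : ∀ {x : ℝ → E}, (∀ s ∈ Icc c d, HasDerivWithinAt x (V (x s, s)) (Icc c d) s) →
      ∀ s ∈ Ico t d, HasDerivWithinAt x (V (x s, s)) (Ici s) s := fun hx s hs =>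
    (hx s (hsub (Ico_subset_Icc_self hs))).mono_of_mem_nhdsWithin
      (mem_of_superset (Icc_mem_nhdsGE hs.2) (Icc_subset_Icc_left (hct.trans hs.1)))
  refine ODE_solution_unique_of_mem_Icc_right (v := fun s x => V (x, s))
    (s := fun _ => Metric.closedBall 0 (max R R')) (K := K) (fun s hs => ?_) hyc (hright hy)
    (fun s hs => ?_) hwc (hright hw) (fun s hs => ?_) hyw
  · refine LipschitzOnWith.of_dist_le_mul fun x hx x' hx' => ?_
    simpa [Prod.dist_eq] using hK.dist_le_mul (x, s) ⟨hx, Ico_subset_Icc_self hs⟩ (x', s)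
      ⟨hx', Ico_subset_Icc_self hs⟩
  · exact mem_closedBall_zero_iff.2 ((hR s (Ico_subset_Icc_self hs)).trans (le_max_left _ _))
  · exact mem_closedBall_zero_iff.2 ((hR' s (Ico_subset_Icc_self hs)).trans (le_max_right _ _))

/-- The chain rule for the partial derivative in the parameter. -/
theorem fderiv_parameter_eq {F : E × P × ℝ → E} (hF : ContDiff ℝ 1 F) (x : E) (θ : P) (t : ℝ) :
    fderiv ℝ (fun ϑ => F (x, ϑ, t)) θ = (fderiv ℝ F (x, θ, t)).comp
      ((ContinuousLinearMap.inr ℝ E (P × ℝ)).comp (ContinuousLinearMap.inl ℝ P ℝ)) := by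
  have hpair : HasFDerivAt (fun ϑ : P => (x, ϑ, t))
      ((ContinuousLinearMap.inr ℝ E (P × ℝ)).comp (ContinuousLinearMap.inl ℝ P ℝ)) θ :=
    ((hasFDerivAt_const x θ).prodMk ((hasFDerivAt_id θ).prodMk
      (hasFDerivAt_const t θ))).congr_fderiv (by ext <;> simp)
  exact (((hF.differentiable one_ne_zero) _).hasFDerivAt.comp θ hpair).fderiv

theorem continuousOn_fderiv_parameter {F : E × P × ℝ → E} (hF : ContDiff ℝ 1 F) {x : ℝ → E}
    {S : Set ℝ} (hx : ContinuousOn x S) (θ : P) :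
    ContinuousOn (fun t => fderiv ℝ (fun ϑ => F (x t, ϑ, t)) θ) S := by
  simp only [fderiv_parameter_eq hF]
  exact ((hF.continuous_fderiv one_ne_zero).comp_continuousOn
    (hx.prodMk (continuousOn_const.prodMk continuousOn_id))).clm_comp continuousOn_const

/-- First-order **Alekseev–Gröbner formula**: if `Φ` is constant along the solutions of the field
`F` with parameter `θ`, then the increment of `Φ` along solutions for the parameters `θ + ε • v`
has derivative at `ε = 0` the integral of the propagated parameter sensitivity of `F`. -/
theorem hasDerivAt_flow_increment [ProperSpace E] [ProperSpace P] {c d : ℝ} (hcd : c ≤ d)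
    {F : E × P × ℝ → E} (hF : ContDiff ℝ 1 F) {θ v : P} {Z : ℝ → ℝ → E}
    (hZode : ∀ ε, ∀ t ∈ Icc c d,
      HasDerivWithinAt (Z ε) (F (Z ε t, θ + ε • v, t)) (Icc c d) t)
    (hZdiff : ∀ t ∈ Icc c d, DifferentiableAt ℝ (fun ε => Z ε t) 0)
    {R : ℝ} (hZbdd : ∀ᶠ ε in 𝓝 (0 : ℝ), ∀ t ∈ Icc c d, ‖Z ε t‖ ≤ R)
    {Φ : ℝ → E → E} {DΦ : ℝ → E → (E →L[ℝ] E)}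
    (hflow : ∀ t ∈ Icc c d, ∀ x, ∃ y : ℝ → E, y t = x ∧
      HasDerivWithinAt y (F (x, θ, t)) (Icc c d) t ∧ ∀ s ∈ Icc c d, Φ s (y s) = Φ t x)
    (hDΦ : ∀ t ∈ Icc c d, ∀ x, HasFDerivAt (Φ t) (DΦ t x) x)
    (hDΦcont : Continuous fun s : ℝ × E => DΦ s.1 s.2) :
    HasDerivAt (fun ε => Φ d (Z ε d) - Φ c (Z ε c))
      (∫ t in c..d, DΦ t (Z 0 t) (fderiv ℝ (fun ϑ => F (Z 0 t, ϑ, t)) θ v)) 0 := by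
  set I : ℝ → ℝ → E := fun ε t =>
    DΦ t (Z ε t) (F (Z ε t, θ + ε • v, t) - F (Z ε t, θ, t)) with hI
  have hZcont : ∀ ε, ContinuousOn (Z ε) (Icc c d) := fun ε t ht =>
    (hZode ε t ht).continuousWithinAt
  have hIcont : ∀ ε, ContinuousOn (I ε) (Icc c d) := fun ε => by
    refine (hDΦcont.comp_continuousOn (continuousOn_id.prodMk (hZcont ε))).clm_apply
      (.sub ?_ ?_) <;>
    exact hF.continuous.comp_continuousOn
      ((hZcont ε).prodMk (continuousOn_const.prodMk continuousOn_id))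
  have hderiv : ∀ ε, ∀ t ∈ Icc c d,
      HasDerivWithinAt (fun s => Φ s (Z ε s)) (I ε t) (Icc c d) t := by
    intro ε t ht
    obtain ⟨y, hyt, hy, hΦy⟩ := hflow t ht (Z ε t)
    refine ((hasDerivWithinAt_image_sub_image hDΦ hDΦcont (hZode ε t ht) hy hyt.symm).add_const
      (Φ t (Z ε t))).congr (fun s hs => ?_) ?_
    · simp [hΦy s hs]
    · simp [hyt]
  have hFTC : ∀ ε, Φ d (Z ε d) - Φ c (Z ε c) = ∫ t in c..d, I ε t := fun ε =>
    (integral_eq_sub_of_hasDerivAt_of_le hcd (fun t ht => (hderiv ε t ht).continuousWithinAt)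
      (fun t ht => (hderiv ε t (Ioo_subset_Icc_self ht)).hasDerivAt (Icc_mem_nhds ht.1 ht.2))
      ((hIcont ε).intervalIntegrable_of_Icc hcd)).symm
  obtain ⟨K, hK⟩ := LocallyLipschitzOn.exists_lipschitzOnWith_of_compact
    ((isCompact_closedBall (0 : E) R).prod
      ((isCompact_closedBall θ ‖v‖).prod (isCompact_Icc (a := c) (b := d))))
    (hF.locallyLipschitz.locallyLipschitzOn)
  obtain ⟨M, hM⟩ := ((isCompact_Icc (a := c) (b := d)).prod
    (isCompact_closedBall (0 : E) R)).exists_bound_of_continuousOn hDΦcont.continuousOn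
  simp only [hFTC]
  rw [hasDerivAt_iff_tendsto_slope_zero]
  have hI0 : ∀ t, I 0 t = 0 := fun t => by simp [hI]
  simp only [zero_add, hI0, intervalIntegral.integral_zero, sub_zero,
    ← intervalIntegral.integral_smul]
  refine intervalIntegral.tendsto_integral_filter_of_dominated_convergence
    (fun _ => M * (K * ‖v‖)) (Eventually.of_forall fun ε => ?_) ?_
    intervalIntegrable_const (Eventually.of_forall fun t ht => ?_)
  · rw [uIoc_of_le hcd]
    exact (((hIcont ε).const_smul ε⁻¹).mono Ioc_subset_Icc_self).aestronglyMeasurable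
      measurableSet_Ioc
  · filter_upwards [mem_nhdsWithin_of_mem_nhds hZbdd, self_mem_nhdsWithin,
      mem_nhdsWithin_of_mem_nhds (Metric.closedBall_mem_nhds (0 : ℝ) one_pos)] with ε hεR hε hε1
    refine Eventually.of_forall fun t ht => ?_
    rw [uIoc_of_le hcd] at ht
    have ht' := Ioc_subset_Icc_self ht
    have hZR : Z ε t ∈ Metric.closedBall (0 : E) R := mem_closedBall_zero_iff.2 (hεR t ht')
    have hε0 : 0 < ‖ε‖ := norm_pos_iff.2 hε
    have hLip : ‖F (Z ε t, θ + ε • v, t) - F (Z ε t, θ, t)‖ ≤ K * (‖ε‖ * ‖v‖) := by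
      have := hK.dist_le_mul (Z ε t, θ + ε • v, t) ⟨hZR, ?_, ht'⟩ (Z ε t, θ, t)
        ⟨hZR, Metric.mem_closedBall_self (norm_nonneg v), ht'⟩
      · have hεv : 0 ≤ |ε| * ‖v‖ := by positivity
        simpa [Prod.dist_eq, dist_eq_norm, norm_smul, max_eq_left hεv, max_eq_right hεv] using this
      · rw [mem_closedBall_iff_norm, add_sub_cancel_left, norm_smul]
        exact mul_le_of_le_one_left (norm_nonneg v) (mem_closedBall_zero_iff.1 hε1)
    have hM' := hM (t, Z ε t) ⟨ht', hZR⟩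
    calc ‖ε⁻¹ • I ε t‖ = ‖ε‖⁻¹ * ‖I ε t‖ := by rw [norm_smul, norm_inv]
      _ ≤ ‖ε‖⁻¹ * (M * (K * (‖ε‖ * ‖v‖))) := by
        gcongr
        exact (ContinuousLinearMap.le_opNorm _ _).trans (mul_le_mul hM' hLip (norm_nonneg _)
          ((norm_nonneg _).trans hM'))
      _ = M * (K * ‖v‖) := by field_simp
  · rw [uIoc_of_le hcd] at ht
    have hZt := (hZdiff t (Ioc_subset_Icc_self ht)).hasDerivAt
    have hdiff : HasDerivAt (fun ε => F (Z ε t, θ + ε • v, t) - F (Z ε t, θ, t))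
        (fderiv ℝ (fun ϑ => F (Z 0 t, ϑ, t)) θ v) 0 := by
      have hline : HasDerivAt (fun ε : ℝ => θ + ε • v) v 0 := by
        simpa using ((hasDerivAt_id (0 : ℝ)).smul_const v).const_add θ
      have hFd : ∀ w, HasFDerivAt F (fderiv ℝ F w) w := fun w =>
        (hF.differentiable one_ne_zero w).hasFDerivAt
      have h₁ := (hFd (Z 0 t, θ + (0 : ℝ) • v, t)).comp_hasDerivAt (0 : ℝ)
        (hZt.prodMk (hline.prodMk (hasDerivAt_const 0 t)))
      have h₂ := (hFd (Z 0 t, θ, t)).comp_hasDerivAt (0 : ℝ)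
        (hZt.prodMk ((hasDerivAt_const 0 θ).prodMk (hasDerivAt_const 0 t)))
      refine (h₁.sub h₂).congr_deriv ?_
      rw [fderiv_parameter_eq hF, zero_smul, add_zero, ← map_sub]
      simp
    have hslope := hasDerivAt_iff_tendsto_slope_zero.1 hdiff
    simp only [zero_add, zero_smul, add_zero, sub_self, sub_zero] at hslope
    have hDlim : Tendsto (fun ε => DΦ t (Z ε t)) (𝓝[≠] 0) (𝓝 (DΦ t (Z 0 t))) :=
      ((hDΦcont.comp (Continuous.prodMk_right t)).continuousAt.comp
        hZt.continuousAt).tendsto.mono_left nhdsWithin_le_nhds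
    simpa only [hI, map_smul, Function.comp_def] using
      (isBoundedBilinearMap_apply.continuous.tendsto _).comp (hDlim.prodMk_nhds hslope)

end PiecewiseFlow

/-- **Piecewise continuous backpropagation.**  Consider a path `z` with `z 0 = z₀` which
follows the field `f` with parameters `θ` on `[0, T/2]` and the field `g` with
parameters `φ` on `(T/2, T]`.  For a differentiable terminal loss `L`, with adjoint
`a t = DL (z T) ∘ D_x Φ_{t,T} (z t)` (where `Φ_{t,T}` is the piecewise
time-`t`-to-time-`T` solution map), the gradient with respect to each parameter set is
obtained by integrating the adjoint against the corresponding parameter Jacobian only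
over the time interval on which that field acts. -/
theorem piecewise_continuous_backpropagation
    (n p q : ℕ) (hn : 1 ≤ n) (hp : 1 ≤ p) (hq : 1 ≤ q) (T : ℝ) (hT : 0 < T)
    (f : (Fin n → ℝ) × (Fin p → ℝ) × ℝ → (Fin n → ℝ)) (hf : ContDiff ℝ 1 f)
    (g : (Fin n → ℝ) × (Fin q → ℝ) × ℝ → (Fin n → ℝ)) (hg : ContDiff ℝ 1 g)
    (z₀ : Fin n → ℝ)
    (z : ((Fin p → ℝ) × (Fin q → ℝ)) → ℝ → (Fin n → ℝ))
    (hzcont : ∀ ψ, ContinuousOn (z ψ) (Icc (0 : ℝ) T))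
    (hz0 : ∀ ψ, z ψ 0 = z₀)
    (hzode₁ : ∀ ψ, ∀ t ∈ Icc (0 : ℝ) (T / 2),
      HasDerivWithinAt (z ψ) (f (z ψ t, ψ.1, t)) (Icc (0 : ℝ) (T / 2)) t)
    (hzode₂ : ∀ ψ, ∀ t ∈ Ioc (T / 2) T,
      HasDerivWithinAt (z ψ) (g (z ψ t, ψ.2, t)) (Ioc (T / 2) T) t)
    (Dz : ℝ → ((Fin p → ℝ) × (Fin q → ℝ)) →
      (((Fin p → ℝ) × (Fin q → ℝ)) →L[ℝ] (Fin n → ℝ)))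
    (hDz : ∀ t ∈ Icc (0 : ℝ) T, ∀ ψ, HasFDerivAt (fun ψ' => z ψ' t) (Dz t ψ) ψ)
    (hDzcont : Continuous fun s : ℝ × ((Fin p → ℝ) × (Fin q → ℝ)) => Dz s.1 s.2)
    (θ₀ : Fin p → ℝ) (φ₀ : Fin q → ℝ)
    (Φ : ℝ → (Fin n → ℝ) → (Fin n → ℝ))
    (hΦ : ∀ t ∈ Icc (0 : ℝ) T, ∀ x, ∃ y : ℝ → (Fin n → ℝ),
      y t = x ∧ ContinuousOn y (Icc (0 : ℝ) T) ∧
        (∀ s ∈ Icc (0 : ℝ) (T / 2),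
          HasDerivWithinAt y (f (y s, θ₀, s)) (Icc (0 : ℝ) (T / 2)) s) ∧
        (∀ s ∈ Ioc (T / 2) T,
          HasDerivWithinAt y (g (y s, φ₀, s)) (Ioc (T / 2) T) s) ∧
        Φ t x = y T)
    (DΦ : ℝ → (Fin n → ℝ) → ((Fin n → ℝ) →L[ℝ] (Fin n → ℝ)))
    (hDΦ : ∀ t ∈ Icc (0 : ℝ) T, ∀ x, HasFDerivAt (Φ t) (DΦ t x) x)
    (hDΦcont : Continuous fun s : ℝ × (Fin n → ℝ) => DΦ s.1 s.2)
    (L : (Fin n → ℝ) → ℝ) (hL : Differentiable ℝ L)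
    (a : ℝ → ((Fin n → ℝ) →L[ℝ] ℝ))
    (ha : a = fun t => (fderiv ℝ L (z (θ₀, φ₀) T)).comp (DΦ t (z (θ₀, φ₀) t))) :
    fderiv ℝ (fun θ => L (z (θ, φ₀) T)) θ₀ =
        (∫ t in (0 : ℝ)..(T / 2),
          (a t).comp (fderiv ℝ (fun θ => f (z (θ₀, φ₀) t, θ, t)) θ₀)) ∧
      fderiv ℝ (fun φ => L (z (θ₀, φ) T)) φ₀ =
        ∫ t in (T / 2)..T,
          (a t).comp (fderiv ℝ (fun φ => g (z (θ₀, φ₀) t, φ, t)) φ₀) := by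
  have hT0 : (0 : ℝ) ≤ T / 2 := by linarith
  have hT2 : T / 2 < T := by linarith
  have hsub₁ : Icc (0 : ℝ) (T / 2) ⊆ Icc 0 T := Icc_subset_Icc_right hT2.le
  have hsub₂ : Icc (T / 2) T ⊆ Icc 0 T := Icc_subset_Icc_left hT0
  have hgcont : ∀ φ, ContDiff ℝ 1 fun w : (Fin n → ℝ) × ℝ => g (w.1, φ, w.2) := fun φ => by
    fun_prop
  have hfcont : ∀ θ, ContDiff ℝ 1 fun w : (Fin n → ℝ) × ℝ => f (w.1, θ, w.2) := fun θ => by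
    fun_prop
  have hzode₂' : ∀ ψ, ∀ t ∈ Icc (T / 2) T,
      HasDerivWithinAt (z ψ) (g (z ψ t, ψ.2, t)) (Icc (T / 2) T) t := fun ψ =>
    hasDerivWithinAt_Icc_of_Ioc hT2 (hgcont ψ.2).continuous ((hzcont ψ).mono hsub₂) (hzode₂ ψ)
  have hflow : ∀ t ∈ Icc (0 : ℝ) T, ∀ x, ∃ y : ℝ → (Fin n → ℝ), y t = x ∧
      (∀ s ∈ Icc (0 : ℝ) (T / 2),
        HasDerivWithinAt y (f (y s, θ₀, s)) (Icc (0 : ℝ) (T / 2)) s) ∧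
      (∀ s ∈ Icc (T / 2) T, HasDerivWithinAt y (g (y s, φ₀, s)) (Icc (T / 2) T) s) ∧
      Φ t x = y T := fun t ht x => by
    obtain ⟨y, hyt, hyc, hy₁, hy₂, hΦy⟩ := hΦ t ht x
    exact ⟨y, hyt, hy₁, hasDerivWithinAt_Icc_of_Ioc hT2 (hgcont φ₀).continuous
      (hyc.mono hsub₂) hy₂, hΦy⟩
  have hinv : ∀ t ∈ Icc (0 : ℝ) T, ∀ x, ∃ y : ℝ → (Fin n → ℝ), y t = x ∧
      (∀ s ∈ Icc (0 : ℝ) (T / 2),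
        HasDerivWithinAt y (f (y s, θ₀, s)) (Icc (0 : ℝ) (T / 2)) s) ∧
      (∀ s ∈ Icc (T / 2) T, HasDerivWithinAt y (g (y s, φ₀, s)) (Icc (T / 2) T) s) ∧
      ∀ s ∈ Icc (0 : ℝ) T, Φ s (y s) = Φ t x := fun t ht x => by
    obtain ⟨y, hyt, hy₁, hy₂, hΦy⟩ := hflow t ht x
    refine ⟨y, hyt, hy₁, hy₂, fun s hs => ?_⟩
    obtain ⟨w, hws, hw₁, hw₂, hΦw⟩ := hflow s hs (y s)
    rw [hΦw, hΦy]
    rcases le_total s (T / 2) with hsT | hsT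
    · exact eqOn_Icc_of_contDiff le_rfl (hgcont φ₀) hw₂ hy₂
        (eqOn_Icc_of_contDiff hs.1 (hfcont θ₀) hw₁ hy₁ hws ⟨hsT, le_rfl⟩) ⟨hT2.le, le_rfl⟩
    · exact eqOn_Icc_of_contDiff hsT (hgcont φ₀) hw₂ hy₂ hws ⟨hs.2, le_rfl⟩
  have hΦT : ∀ x, Φ T x = x := fun x => by
    obtain ⟨y, hyT, -, -, hΦy⟩ := hflow T ⟨hT.le, le_rfl⟩ x
    rw [hΦy, hyT]
  obtain ⟨R, hR⟩ := isCompact_Icc.exists_bound_of_continuousOn (hzcont (θ₀, φ₀))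
  obtain ⟨C, hC⟩ := ((isCompact_Icc (a := (0 : ℝ)) (b := T)).prod
    (isCompact_closedBall (θ₀, φ₀) 1)).exists_bound_of_continuousOn hDzcont.continuousOn
  have hbdd : ∀ ψ ∈ Metric.closedBall (θ₀, φ₀) 1, ∀ t ∈ Icc (0 : ℝ) T, ‖z ψ t‖ ≤ R + C := by
    intro ψ hψ t ht
    have hmem : (θ₀, φ₀) ∈ Metric.closedBall (θ₀, φ₀) 1 := Metric.mem_closedBall_self zero_le_one
    have hLip := Convex.norm_image_sub_le_of_norm_hasFDerivWithin_le
      (fun ψ' _ => (hDz t ht ψ').hasFDerivWithinAt) (fun ψ' hψ' => hC (t, ψ') ⟨ht, hψ'⟩)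
      (convex_closedBall (θ₀, φ₀) 1) hmem hψ
    have hC0 : 0 ≤ C := (norm_nonneg _).trans (hC (t, (θ₀, φ₀)) ⟨ht, hmem⟩)
    calc ‖z ψ t‖ ≤ ‖z (θ₀, φ₀) t‖ + ‖z ψ t - z (θ₀, φ₀) t‖ := norm_le_norm_add_norm_sub' _ _
      _ ≤ R + C := add_le_add (hR t ht)
        (hLip.trans (mul_le_of_le_one_right hC0 (mem_closedBall_iff_norm.1 hψ)))
  have hsens : ∀ v w, Dz T (θ₀, φ₀) (v, w) =
      (∫ t in (0 : ℝ)..(T / 2), DΦ t (z (θ₀, φ₀) t)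
        (fderiv ℝ (fun θ => f (z (θ₀, φ₀) t, θ, t)) θ₀ v)) +
      ∫ t in (T / 2)..T, DΦ t (z (θ₀, φ₀) t)
        (fderiv ℝ (fun φ => g (z (θ₀, φ₀) t, φ, t)) φ₀ w) := by
    intro v w
    set Z : ℝ → ℝ → (Fin n → ℝ) := fun ε => z (θ₀ + ε • v, φ₀ + ε • w) with hZ
    have hZ0 : Z 0 = z (θ₀, φ₀) := by simp [hZ]
    have hline : HasDerivAt (fun ε : ℝ => (θ₀ + ε • v, φ₀ + ε • w)) (v, w) 0 := by
      simpa using (((hasDerivAt_id (0 : ℝ)).smul_const v).const_add θ₀).prodMk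
        (((hasDerivAt_id (0 : ℝ)).smul_const w).const_add φ₀)
    have hZderiv : ∀ t ∈ Icc (0 : ℝ) T, HasDerivAt (fun ε => Z ε t) (Dz t (θ₀, φ₀) (v, w)) 0 :=
      fun t ht => HasFDerivAt.comp_hasDerivAt (0 : ℝ)
        (f := fun ε : ℝ => (θ₀ + ε • v, φ₀ + ε • w)) (l := fun ψ => z ψ t)
        (by simpa using hDz t ht (θ₀, φ₀)) hline
    have hZbdd : ∀ᶠ ε in 𝓝 (0 : ℝ), ∀ t ∈ Icc (0 : ℝ) T, ‖Z ε t‖ ≤ R + C := by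
      filter_upwards [hline.continuousAt.preimage_mem_nhds
        (by simpa using Metric.closedBall_mem_nhds (θ₀, φ₀) one_pos)] with ε hε using hbdd _ hε
    have h₁ := hasDerivAt_flow_increment hT0 hf (θ := θ₀) (v := v) (Z := Z)
      (fun ε => hzode₁ (θ₀ + ε • v, φ₀ + ε • w))
      (fun t ht => (hZderiv t (hsub₁ ht)).differentiableAt)
      (hZbdd.mono fun ε hε t ht => hε t (hsub₁ ht))
      (fun t ht x => by
        obtain ⟨y, rfl, hy₁, -, hy⟩ := hinv t (hsub₁ ht) x
        exact ⟨y, rfl, hy₁ t ht, fun s hs => hy s (hsub₁ hs)⟩)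
      (fun t ht => hDΦ t (hsub₁ ht)) hDΦcont
    have h₂ := hasDerivAt_flow_increment hT2.le hg (θ := φ₀) (v := w) (Z := Z)
      (fun ε => hzode₂' (θ₀ + ε • v, φ₀ + ε • w))
      (fun t ht => (hZderiv t (hsub₂ ht)).differentiableAt)
      (hZbdd.mono fun ε hε t ht => hε t (hsub₂ ht))
      (fun t ht x => by
        obtain ⟨y, rfl, -, hy₂, hy⟩ := hinv t (hsub₂ ht) x
        exact ⟨y, rfl, hy₂ t ht, fun s hs => hy s (hsub₂ hs)⟩)
      (fun t ht => hDΦ t (hsub₂ ht)) hDΦcont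
    rw [hZ0] at h₁ h₂
    refine (hZderiv T ⟨hT.le, le_rfl⟩).unique
      (((h₁.add h₂).add_const (Φ 0 z₀)).congr_of_eventuallyEq (Eventually.of_forall fun ε => ?_))
    have hZε : Z ε 0 = z₀ := hz0 _
    simp [hΦT, hZε]
  have hDΦz : ContinuousOn (fun t => DΦ t (z (θ₀, φ₀) t)) (Icc 0 T) :=
    hDΦcont.comp_continuousOn (continuousOn_id.prodMk (hzcont (θ₀, φ₀)))
  have hacont : ContinuousOn a (Icc 0 T) := ha ▸ continuousOn_const.clm_comp hDΦz
  have hLz : HasFDerivAt (fun ψ => L (z ψ T))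
      ((fderiv ℝ L (z (θ₀, φ₀) T)).comp (Dz T (θ₀, φ₀))) (θ₀, φ₀) :=
    (hL _).hasFDerivAt.comp _ (hDz T ⟨hT.le, le_rfl⟩ _)
  constructor
  · have hJ := continuousOn_fderiv_parameter hf ((hzcont (θ₀, φ₀)).mono hsub₁) θ₀
    have hθ : HasFDerivAt (fun θ => L (z (θ, φ₀) T)) _ θ₀ :=
      HasFDerivAt.comp (g := fun ψ => L (z ψ T)) θ₀ hLz (hasFDerivAt_prodMk_left θ₀ φ₀)
    rw [hθ.fderiv]
    ext1 v
    rw [ContinuousLinearMap.intervalIntegral_apply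
      (((hacont.mono hsub₁).clm_comp hJ).intervalIntegrable_of_Icc hT0)]
    simp only [ContinuousLinearMap.comp_apply, ContinuousLinearMap.inl_apply, hsens, map_zero,
      intervalIntegral.integral_zero, add_zero, ha]
    exact ((fderiv ℝ L _).intervalIntegral_comp_comm (((hDΦz.mono hsub₁).clm_apply
      (hJ.clm_apply continuousOn_const)).intervalIntegrable_of_Icc hT0)).symm
  · have hJ := continuousOn_fderiv_parameter hg ((hzcont (θ₀, φ₀)).mono hsub₂) φ₀
    have hφ : HasFDerivAt (fun φ => L (z (θ₀, φ) T)) _ φ₀ :=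
      HasFDerivAt.comp (g := fun ψ => L (z ψ T)) φ₀ hLz (hasFDerivAt_prodMk_right θ₀ φ₀)
    rw [hφ.fderiv]
    ext1 w
    rw [ContinuousLinearMap.intervalIntegral_apply
      (((hacont.mono hsub₂).clm_comp hJ).intervalIntegrable_of_Icc hT2.le)]
    simp only [ContinuousLinearMap.comp_apply, ContinuousLinearMap.inr_apply, hsens, map_zero,
      intervalIntegral.integral_zero, zero_add, ha]
    exact ((fderiv ℝ L _).intervalIntegral_comp_comm (((hDΦz.mono hsub₂).clm_apply
      (hJ.clm_apply continuousOn_const)).intervalIntegrable_of_Icc hT2.le)).symm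
end
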